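/- For every x ∈ L the following are equivalent: (1) x = 0_L; (2) ∅ ⊢ {(x, 0_B)}; (3) {(x, 1_B)} ⊢ ∅. Dually, for every x ∈ L the following are equivalent: (1') x = 1_L; (2') ∅ ⊢ {(x, 1_B)}; (3') {(x, 0_B)} ⊢ ∅. -/

import Mathlib

/-- An entailment relation on a set `S`: a relation between finite subsets of `S`
satisfying reflexivity (R), monotonicity (M) and transitivity/cut (T). -/
def IsEntailment {S : Type*} [DecidableEq S] (E : Finset S → Finset S → Prop) : Prop :=
  (∀ X Y : Finset S, (∃ x, x ∈ X ∧ x ∈ Y) → E X Y) ∧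
  (∀ X X' Y Y' : Finset S, E X Y → E (X ∪ X') (Y ∪ Y')) ∧
  (∀ X Y : Finset S, ∀ z : S, E X (insert z Y) → E (insert z X) Y → E X Y)

variable (M : Type*) (D : Type*) [Lattice M] [BoundedOrder M] [Lattice D] [BoundedOrder D]
  [Fintype D] [DecidableEq M] [DecidableEq D]

/-- The generating axioms (s), (∧), (∨), (0), (1), (t) for the entailment relation
of `D`-valued lattice maps on `M`. -/
def LatticeAxioms : Finset (M × D) → Finset (M × D) → Prop := fun X Y =>
  (∃ x a b, a ≠ b ∧ X = {(x, a), (x, b)} ∧ Y = ∅) ∨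
  (∃ x y a b, X = {(x, a), (y, b)} ∧ Y = {(x ⊓ y, a ⊓ b)}) ∨
  (∃ x y a b, X = {(x, a), (y, b)} ∧ Y = {(x ⊔ y, a ⊔ b)}) ∨
  (X = ∅ ∧ Y = {((⊥ : M), (⊥ : D))}) ∨
  (X = ∅ ∧ Y = {((⊤ : M), (⊤ : D))}) ∨
  (∃ x : M, X = ∅ ∧ Y = Finset.univ.image (fun a : D => (x, a)))

/-- The least entailment relation on `M × D` containing all the generating axioms:
the entailment relation of `D`-valued lattice maps on `M`. -/
def LatticeEntails (X Y : Finset (M × D)) : Prop :=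
  ∀ E : Finset (M × D) → Finset (M × D) → Prop,
    IsEntailment E → (∀ X' Y', LatticeAxioms M D X' Y' → E X' Y') → E X Y

open Classical in
/-- Soundness of the entailment relation with respect to bounded lattice homomorphisms. -/
theorem entails_sound {L B : Type*} [DistribLattice L] [BoundedOrder L] [BooleanAlgebra B]
    [Fintype B] [DecidableEq L] [DecidableEq B] (f : L → B)
    (hi : ∀ x y, f (x ⊓ y) = f x ⊓ f y) (hs : ∀ x y, f (x ⊔ y) = f x ⊔ f y)
    (hb : f ⊥ = ⊥) (ht : f ⊤ = ⊤) (X Y : Finset (L × B)) (h : LatticeEntails L B X Y)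
    (hX : ∀ p ∈ X, f p.1 = p.2) : ∃ p ∈ Y, f p.1 = p.2 := by
  refine h (fun X Y => (∀ p ∈ X, f p.1 = p.2) → ∃ p ∈ Y, f p.1 = p.2) ⟨?_, ?_, ?_⟩ ?_ hX
  · rintro X Y ⟨x, hx, hy⟩ h
    exact ⟨x, hy, h x hx⟩
  · intro X X' Y Y' h h'
    obtain ⟨p, hp, hq⟩ := h (fun p hp => h' p (Finset.mem_union_left _ hp))
    exact ⟨p, Finset.mem_union_left _ hp, hq⟩
  · intro X Y z h1 h2 h
    obtain ⟨p, hp, hq⟩ := h1 h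
    rcases Finset.mem_insert.1 hp with rfl | hp
    · apply h2
      intro q hq'
      rcases Finset.mem_insert.1 hq' with rfl | hq'
      · exact hq
      · exact h q hq'
    · exact ⟨p, hp, hq⟩
  · rintro X Y (⟨x, a, b, hab, rfl, rfl⟩ | ⟨x, y, a, b, rfl, rfl⟩ | ⟨x, y, a, b, rfl, rfl⟩ |
      ⟨rfl, rfl⟩ | ⟨rfl, rfl⟩ | ⟨x, rfl, rfl⟩) h
    · exact absurd ((h (x, a) (by simp)).symm.trans (h (x, b) (by simp))) hab
    · have h1 := h (x, a) (by simp)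
      have h2 := h (y, b) (by simp)
      exact ⟨_, Finset.mem_singleton_self _, by simp_all⟩
    · have h1 := h (x, a) (by simp)
      have h2 := h (y, b) (by simp)
      exact ⟨_, Finset.mem_singleton_self _, by simp_all⟩
    · exact ⟨_, Finset.mem_singleton_self _, hb⟩
    · exact ⟨_, Finset.mem_singleton_self _, ht⟩
    · exact ⟨(x, f x), by simp, rfl⟩

open Classical in
/-- Separation by two-valued homomorphisms, from the prime ideal theorem. -/
theorem exists_sep {L B : Type*} [DistribLattice L] [BoundedOrder L] [BooleanAlgebra B]
    (x y : L) (h : ¬ x ≤ y) : ∃ f : L → B,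
    (∀ x y, f (x ⊓ y) = f x ⊓ f y) ∧ (∀ x y, f (x ⊔ y) = f x ⊔ f y) ∧
    f ⊥ = ⊥ ∧ f ⊤ = ⊤ ∧ f x = ⊤ ∧ f y = ⊥ := by
  obtain ⟨J, hJ, hI, hd⟩ := DistribLattice.prime_ideal_of_disjoint_filter_ideal
    (F := Order.PFilter.principal x) (I := Order.Ideal.principal y) (by
      rw [Set.disjoint_left]
      intro z hz hz'
      exact h (le_trans (Order.PFilter.mem_principal.1 hz) (Order.Ideal.mem_principal.1 hz')))
  have hx : x ∉ J := fun hx => Set.disjoint_left.1 hd (Order.PFilter.mem_principal.2 le_rfl) hx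
  have hy : y ∈ J := hI (Order.Ideal.mem_principal.2 le_rfl)
  have htop : (⊤ : L) ∉ J := fun ht => hx (J.lower le_top ht)
  refine ⟨fun z => if z ∈ J then ⊥ else ⊤, ?_, ?_, ?_, ?_, ?_, ?_⟩
  · intro a b
    have : a ⊓ b ∈ J ↔ a ∈ J ∨ b ∈ J :=
      ⟨fun h => hJ.mem_or_mem h, fun h => h.elim (J.lower inf_le_left) (J.lower inf_le_right)⟩
    by_cases ha : a ∈ J <;> by_cases hb : b ∈ J <;> simp [this, ha, hb]
  · intro a b
    by_cases ha : a ∈ J <;> by_cases hb : b ∈ J <;> simp [Order.Ideal.sup_mem_iff, ha, hb]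
  · simp
  · simp [htop]
  · simp [hx]
  · simp [hy]

/-- If `(x, a)` is derivable then `(x, b)` is refutable for `b ≠ a`. -/
theorem entails_refute {L B : Type*} [DistribLattice L] [BoundedOrder L] [BooleanAlgebra B]
    [Fintype B] [DecidableEq L] [DecidableEq B] (x : L) (a b : B) (hab : a ≠ b)
    (h : LatticeEntails L B ∅ {(x, a)}) : LatticeEntails L B {(x, b)} ∅ := by
  intro E hE hA
  refine hE.2.2 _ _ (x, a) ?_ ?_
  · simpa using hE.2.1 ∅ {(x, b)} _ ∅ (h E hE hA)
  · exact hA _ _ (Or.inl ⟨x, a, b, hab, rfl, rfl⟩)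

theorem stmt11 {L B : Type*} [DistribLattice L] [BoundedOrder L] [BooleanAlgebra B]
    [Fintype B] [Nontrivial B] [DecidableEq L] [DecidableEq B] (x : L) :
    ((x = ⊥ ↔ LatticeEntails L B ∅ {(x, (⊥ : B))}) ∧
     (x = ⊥ ↔ LatticeEntails L B {(x, (⊤ : B))} ∅)) ∧
    ((x = ⊤ ↔ LatticeEntails L B ∅ {(x, (⊤ : B))}) ∧
     (x = ⊤ ↔ LatticeEntails L B {(x, (⊥ : B))} ∅)) := by
  have hbt : (⊥ : B) ≠ ⊤ := bot_ne_top
  have h0 : LatticeEntails L B ∅ {((⊥ : L), (⊥ : B))} := fun E _ hA =>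
    hA _ _ (Or.inr (Or.inr (Or.inr (Or.inl ⟨rfl, rfl⟩))))
  have h1 : LatticeEntails L B ∅ {((⊤ : L), (⊤ : B))} := fun E _ hA =>
    hA _ _ (Or.inr (Or.inr (Or.inr (Or.inr (Or.inl ⟨rfl, rfl⟩)))))
  refine ⟨⟨⟨?_, ?_⟩, ⟨?_, ?_⟩⟩, ⟨⟨?_, ?_⟩, ⟨?_, ?_⟩⟩⟩
  · rintro rfl
    exact h0
  · intro h
    by_contra hx
    obtain ⟨f, hi, hs, hb, ht, hfx, -⟩ := exists_sep (B := B) x ⊥ (fun h => hx (le_bot_iff.1 h))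
    have := entails_sound f hi hs hb ht _ _ h (by simp)
    simp [hfx] at this
  · rintro rfl
    exact entails_refute _ _ _ hbt h0
  · intro h
    by_contra hx
    obtain ⟨f, hi, hs, hb, ht, hfx, -⟩ := exists_sep (B := B) x ⊥ (fun h => hx (le_bot_iff.1 h))
    have := entails_sound f hi hs hb ht _ _ h (by simp [hfx])
    simp at this
  · rintro rfl
    exact h1
  · intro h
    by_contra hx
    obtain ⟨f, hi, hs, hb, ht, -, hfx⟩ := exists_sep (B := B) ⊤ x (fun h => hx (top_le_iff.1 h))
    have := entails_sound f hi hs hb ht _ _ h (by simp)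
    simp [hfx] at this
  · rintro rfl
    exact entails_refute _ _ _ hbt.symm h1
  · intro h
    by_contra hx
    obtain ⟨f, hi, hs, hb, ht, -, hfx⟩ := exists_sep (B := B) ⊤ x (fun h => hx (top_le_iff.1 h))
    have := entails_sound f hi hs hb ht _ _ h (by simp [hfx])
    simp at this
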